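/- For every stable matching process SM (i.e., for every choice of tie-breaking rule in the greedy step), every online algorithm ALG, and all nonnegative round weights w_1, …, w_T, the expected reward of SM is at least 0.316 times the expected reward of ALG. -/

import Mathlib

/-!
Fix a round `t`, let `O` be the expected number of successes of `ALG` in it, and let `a s` be the
expected number of successful edges that `SM` has found before round `s`. These edges are
committed, so `SM` collects `a (t + 1)` expected successes in round `t`.

A success of `ALG` in round `t` either touches a committed edge of `SM`, which happens to at most
two successes per committed edge, or it is still free for `SM` in round `s`. In the latter case
`ALG` selected it for the first time in some round `r ≤ t`. The free edges that `ALG` selects for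
the first time in round `r` form a matching chosen independently of their own outcomes, so their
expected number of successes equals their expected total probability. The untested edges that the
greedy step of `SM` adds in round `s` have at least half of that total probability, so twice the
increment `a (s + 1) - a s` bounds the expected number of these successes. Summing over `r`,
`O ≤ 2 * a s + (t + 1) * (2 * (a (s + 1) - a s))` for all `s`, so `O - 2 * a s` shrinks by the
factor `1 - 1 / (t + 1)` in each round and `a (t + 1) ≥ (1 - exp (-1)) / 2 * O`.
-/

open Finset

/-- A finite simple graph presented via an abstract edge type: each edge has a
set of exactly two endpoints, and distinct edges have distinct endpoint sets. -/
structure GraphEdges (V E : Type) where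
  ends : E → Finset V
  card_ends : ∀ e, (ends e).card = 2
  ends_injective : Function.Injective ends

variable {V E : Type}

/-- A matching: a set of pairwise endpoint-disjoint edges. -/
def GraphEdges.IsMatching (G : GraphEdges V E) (M : Finset E) : Prop :=
  ∀ e ∈ M, ∀ f ∈ M, e ≠ f → Disjoint (G.ends e) (G.ends f)

/-- `select` is an online algorithm: under each realization `ω` it selects a
matching in every round, and its round-`t` selection depends only on its own
selections in earlier rounds and on the realized values of the edges it
selected in those rounds. -/
def GraphEdges.IsOnline (G : GraphEdges V E) (select : (E → Bool) → ℕ → Finset E) : Prop :=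
  (∀ ω t, G.IsMatching (select ω t)) ∧
  (∀ ω ω' t, (∀ s, s < t → ∀ e ∈ select ω s, ω' e = ω e) → select ω' t = select ω t)

/-- Probability of the sample graph `ω` under independent Bernoulli edges. -/
def probOf [Fintype E] (p : E → ℝ) (ω : E → Bool) : ℝ :=
  ∏ e : E, if ω e then p e else 1 - p e

/-- Expected reward of an algorithm: the `w`-weighted expected number of
successful selected edges over rounds `0, …, T-1`. -/
noncomputable def expectedReward [Fintype E] [DecidableEq E] (p : E → ℝ) (w : ℕ → ℝ)
    (T : ℕ) (select : (E → Bool) → ℕ → Finset E) : ℝ :=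
  ∑ ω : E → Bool, probOf p ω *
    ∑ t ∈ Finset.range T, w t * ((select ω t).filter (fun e => ω e)).card

/-- Edges selected by `select` in rounds before `t` under realization `ω`. -/
def selectedBefore [DecidableEq E] (select : (E → Bool) → ℕ → Finset E)
    (ω : E → Bool) (t : ℕ) : Finset E :=
  (Finset.range t).biUnion (select ω)

/-- An edge `f` is available for the greedy step, given the dead (previously
selected and revealed unsuccessful) edges `D` and the current partial matching
`M`: it is not dead, and shares no endpoint with any edge of `M`. -/
def GraphEdges.Avail (G : GraphEdges V E) (D M : Finset E) (f : E) : Prop :=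
  f ∉ D ∧ ∀ e ∈ M, Disjoint (G.ends f) (G.ends e)

/-- `L` records, in order, the edges added by a run of the greedy procedure
extending the committed matching `A`, avoiding dead edges `D`: each added edge
is available (w.r.t. the matching built so far) of maximum probability, and at
the end no available edge remains. -/
def GraphEdges.IsGreedyRun [DecidableEq E] (G : GraphEdges V E) (p : E → ℝ)
    (D A : Finset E) (L : List E) : Prop :=
  (∀ i : Fin L.length,
      G.Avail D (A ∪ (L.take i).toFinset) (L.get i) ∧
      ∀ f, G.Avail D (A ∪ (L.take i).toFinset) f → p f ≤ p (L.get i)) ∧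
  (∀ f, ¬ G.Avail D (A ∪ L.toFinset) f)

/-- `select` is a stable matching process: an online algorithm which in each
round keeps all previously selected successful edges and augments them with a
greedily built matching (ties broken arbitrarily). -/
def GraphEdges.IsSM [DecidableEq E] (G : GraphEdges V E) (p : E → ℝ)
    (select : (E → Bool) → ℕ → Finset E) : Prop :=
  G.IsOnline select ∧
  ∀ ω t,
    ∃ L : List E,
      G.IsGreedyRun p
        ((selectedBefore select ω t).filter (fun e => ¬ ω e))
        ((selectedBefore select ω t).filter (fun e => ω e)) L ∧
      select ω t = (selectedBefore select ω t).filter (fun e => ω e) ∪ L.toFinset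

section Recursion

theorem one_sub_exp_neg_one_mul_le {a : ℕ → ℝ} {b : ℝ} {n : ℕ} (hn : n ≠ 0) (hb : 0 ≤ b)
    (ha : a 0 = 0) (h : ∀ s < n, b ≤ a s + n * (a (s + 1) - a s)) :
    (1 - Real.exp (-1)) * b ≤ a n := by
  have hn1 : (1 : ℝ) ≤ n := mod_cast Nat.one_le_iff_ne_zero.2 hn
  have hn0 : (0 : ℝ) < n := by linarith
  have contraction : ∀ s < n, b - a (s + 1) ≤ (1 - 1 / n) * (b - a s) := fun s hs => by
    have increment : (b - a s) / n ≤ a (s + 1) - a s := by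
      rw [div_le_iff₀' hn0]
      linarith [h s hs]
    linarith [show (1 - 1 / (n : ℝ)) * (b - a s) = b - a s - (b - a s) / n by ring]
  have geometric : b - a n ≤ (1 - 1 / n) ^ n * (b - a 0) :=
    le_geom (u := fun s => b - a s) (sub_nonneg.2 ((div_le_one hn0).2 hn1)) n contraction
  have exponential : (1 - 1 / (n : ℝ)) ^ n * b ≤ Real.exp (-1) * b :=
    mul_le_mul_of_nonneg_right (Real.one_sub_div_pow_le_exp_neg hn1) hb
  rw [ha, sub_zero] at geometric
  linarith

end Recursion

section Expectation

theorem probOf_nonneg [Fintype E] {p : E → ℝ} (hp : ∀ e, 0 ≤ p e ∧ p e ≤ 1) (ω : E → Bool) :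
    0 ≤ probOf p ω :=
  prod_nonneg fun e _ => by
    split_ifs
    exacts [(hp e).1, sub_nonneg.2 (hp e).2]

variable [DecidableEq E]

/-- A random edge set `N` is nonanticipating if whether it contains an edge `e` does not depend on
the outcome of `e` itself; since the new outcome `b` is arbitrary, one implication suffices. -/
def IsNonanticipating (N : (E → Bool) → Finset E) : Prop :=
  ∀ ω e b, e ∈ N ω → e ∈ N (Function.update ω e b)

theorem IsNonanticipating.inter {N N' : (E → Bool) → Finset E} (hN : IsNonanticipating N)
    (hN' : IsNonanticipating N') : IsNonanticipating fun ω => N ω ∩ N' ω := fun ω e b he =>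
  mem_inter.2 ⟨hN ω e b (mem_inter.1 he).1, hN' ω e b (mem_inter.1 he).2⟩

theorem IsNonanticipating.mem_update_iff {N : (E → Bool) → Finset E} (hN : IsNonanticipating N)
    (ω : E → Bool) (e : E) (b : Bool) : e ∈ N (Function.update ω e b) ↔ e ∈ N ω :=
  ⟨fun he => by simpa using hN _ e (ω e) he, hN ω e b⟩

variable [Fintype E]

theorem probOf_update (p : E → ℝ) (ω : E → Bool) (e : E) (b : Bool) :
    probOf p (Function.update ω e b) =
      (if b then p e else 1 - p e) * ∏ f ∈ univ.erase e, if ω f then p f else 1 - p f := by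
  rw [probOf, ← mul_prod_erase univ _ (mem_univ e), Function.update_self]
  congr 1
  exact prod_congr rfl fun f hf => by rw [Function.update_of_ne (ne_of_mem_erase hf)]

/-- Expectation of a random variable on sample graphs, as a linear functional. -/
noncomputable def expectation (p : E → ℝ) : ((E → Bool) → ℝ) →ₗ[ℝ] ℝ :=
  ∑ ω, probOf p ω • LinearMap.proj ω

theorem expectation_apply (p : E → ℝ) (X : (E → Bool) → ℝ) :
    expectation p X = ∑ ω, probOf p ω * X ω := by
  simp [expectation]

theorem expectation_mono {p : E → ℝ} (hp : ∀ e, 0 ≤ p e ∧ p e ≤ 1) {X Y : (E → Bool) → ℝ}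
    (h : X ≤ Y) : expectation p X ≤ expectation p Y := by
  simp only [expectation_apply]
  exact sum_le_sum fun ω _ => mul_le_mul_of_nonneg_left (h ω) (probOf_nonneg hp ω)

theorem expectation_ite_apply (p : E → ℝ) {e : E} {X : (E → Bool) → ℝ}
    (hX : ∀ ω b, X (Function.update ω e b) = X ω) :
    expectation p (fun ω => if ω e then X ω else 0) = p e * expectation p X := by
  simp only [expectation_apply, mul_sum]
  rw [← sub_eq_zero, ← sum_sub_distrib]
  -- The contributions of `ω` and of `ω` with coordinate `e` flipped cancel.
  refine sum_involution (fun ω _ => Function.update ω e (!ω e)) (fun ω _ => ?_)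
    (fun ω _ _ hfix => by simpa using congrFun hfix e) (fun _ _ => mem_univ _) (fun ω _ => by simp)
  have hω := probOf_update p ω e (ω e)
  rw [Function.update_eq_self] at hω
  rw [hω, probOf_update, hX, Function.update_self]
  cases ω e <;> simp only [Bool.not_false, Bool.not_true, Bool.false_eq_true, if_true,
    if_false] <;> ring

/-- Expected number of successful edges in the random edge set `N`. -/
noncomputable def expectedSuccesses (p : E → ℝ) (N : (E → Bool) → Finset E) : ℝ :=
  expectation p fun ω => #{e ∈ N ω | ω e}

theorem expectedSuccesses_nonneg {p : E → ℝ} (hp : ∀ e, 0 ≤ p e ∧ p e ≤ 1)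
    (N : (E → Bool) → Finset E) : 0 ≤ expectedSuccesses p N := by
  rw [← map_zero (expectation p)]
  exact expectation_mono hp fun ω => Nat.cast_nonneg _

theorem expectedReward_eq_sum_expectedSuccesses (p : E → ℝ) (w : ℕ → ℝ) (T : ℕ)
    (select : (E → Bool) → ℕ → Finset E) :
    expectedReward p w T select = ∑ t ∈ range T, w t * expectedSuccesses p (select · t) := by
  simp only [expectedReward, expectedSuccesses, expectation_apply, mul_sum]
  rw [sum_comm]
  simp only [mul_left_comm]

theorem expectedReward_nonneg {p : E → ℝ} (hp : ∀ e, 0 ≤ p e ∧ p e ≤ 1) {w : ℕ → ℝ}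
    (hw : ∀ t, 0 ≤ w t) (T : ℕ) (select : (E → Bool) → ℕ → Finset E) :
    0 ≤ expectedReward p w T select := by
  rw [expectedReward_eq_sum_expectedSuccesses]
  exact sum_nonneg fun t _ => mul_nonneg (hw t) (expectedSuccesses_nonneg hp _)

theorem IsNonanticipating.expectedSuccesses_eq (p : E → ℝ) {N : (E → Bool) → Finset E}
    (hN : IsNonanticipating N) :
    expectedSuccesses p N = expectation p fun ω => ∑ e ∈ N ω, p e := by
  have card_eq : (fun ω => (#{e ∈ N ω | ω e} : ℝ)) =
      ∑ e, fun ω => if ω e then (if e ∈ N ω then (1 : ℝ) else 0) else 0 := by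
    ext ω
    rw [natCast_card_filter, Finset.sum_apply]
    exact sum_subset_zero_on_sdiff (subset_univ _) (fun e he => by simp [(mem_sdiff.1 he).2])
      fun e he => by simp only [if_pos he]
  have sum_eq : (fun ω => ∑ e ∈ N ω, p e) =
      ∑ e, p e • fun ω => if e ∈ N ω then (1 : ℝ) else 0 := by
    ext ω
    simp
  rw [expectedSuccesses, card_eq, sum_eq, map_sum, map_sum]
  refine sum_congr rfl fun e _ => ?_
  rw [map_smul, smul_eq_mul, expectation_ite_apply p fun ω b => by simp only [hN.mem_update_iff]]

end Expectation

namespace GraphEdges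

variable {G : GraphEdges V E}

section Matching

theorem not_disjoint_ends_self (G : GraphEdges V E) (e : E) :
    ¬ Disjoint (G.ends e) (G.ends e) := by
  rw [disjoint_self_iff_empty, ← card_eq_zero, G.card_ends]
  exact two_ne_zero

theorem IsMatching.mono {M N : Finset E} (hM : G.IsMatching M) (h : N ⊆ M) : G.IsMatching N :=
  fun e he f hf => hM e (h he) f (h hf)

theorem IsMatching.card_le_of_forall_not_disjoint {M : Finset E} (hM : G.IsMatching M)
    {S : Finset V} (h : ∀ e ∈ M, ¬ Disjoint (G.ends e) S) : #M ≤ #S := by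
  classical
  calc #M ≤ #(M.biUnion fun e => G.ends e ∩ S) :=
        card_le_card_biUnion
          (fun e he f hf hef => (hM e he f hf hef).mono inter_subset_left inter_subset_left)
          (fun e he => not_disjoint_iff_nonempty_inter.1 (h e he))
    _ ≤ #S := card_le_card (biUnion_subset.2 fun _ _ => inter_subset_right)

/-- Charging each edge of `M` to an adjacent edge of `F` charges an edge of `F` at most twice,
once per endpoint. -/
theorem IsMatching.sum_le_two_mul_sum {R : Type*} [Semiring R] [PartialOrder R] [IsOrderedRing R]
    {M F : Finset E} (hM : G.IsMatching M) {c : E → R} (hc : ∀ f ∈ F, 0 ≤ c f)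
    (charge : ∀ e ∈ M, ∃ f ∈ F, ¬ Disjoint (G.ends e) (G.ends f) ∧ c e ≤ c f) :
    ∑ e ∈ M, c e ≤ 2 * ∑ f ∈ F, c f := by
  classical
  choose! g hgF hadj hle using charge
  have card_fiber_le (f : E) : #{e ∈ M | g e = f} ≤ 2 := by
    rw [← G.card_ends f]
    refine (hM.mono (filter_subset _ M)).card_le_of_forall_not_disjoint fun e he => ?_
    obtain ⟨heM, rfl⟩ := mem_filter.1 he
    exact hadj e heM
  calc ∑ e ∈ M, c e = ∑ f ∈ F, ∑ e ∈ M with g e = f, c e := (sum_fiberwise_of_maps_to hgF c).symm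
    _ ≤ ∑ f ∈ F, 2 * c f := sum_le_sum fun f hf => by
        calc ∑ e ∈ M with g e = f, c e ≤ #{e ∈ M | g e = f} • c f :=
              sum_le_card_nsmul _ _ _ fun e he => by
                obtain ⟨heM, rfl⟩ := mem_filter.1 he
                exact hle e heM
          _ ≤ 2 • c f := nsmul_le_nsmul_left (hc f hf) (card_fiber_le f)
          _ = 2 * c f := by rw [nsmul_eq_mul, Nat.cast_ofNat]
    _ = 2 * ∑ f ∈ F, c f := (mul_sum ..).symm

end Matching

section Greedy

variable {D A M N : Finset E} {e f : E} {p : E → ℝ} {L : List E}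

theorem Avail.notMem (h : G.Avail D M f) : f ∉ M := fun hf =>
  G.not_disjoint_ends_self f (h.2 f hf)

theorem Avail.anti_right (h : G.Avail D N f) (hMN : M ⊆ N) : G.Avail D M f :=
  ⟨h.1, fun e he => h.2 e (hMN he)⟩

variable [DecidableEq E]

theorem avail_insert_iff :
    G.Avail D (insert e M) f ↔ G.Avail D M f ∧ Disjoint (G.ends f) (G.ends e) := by
  rw [Avail, Avail, forall_mem_insert]
  tauto

theorem IsGreedyRun.avail_of_mem (hL : G.IsGreedyRun p D A L) (hf : f ∈ L) : G.Avail D A f := by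
  obtain ⟨i, rfl⟩ := List.mem_iff_get.1 hf
  exact (hL.1 i).1.anti_right subset_union_left

theorem IsGreedyRun.exists_adjacent_le (hL : G.IsGreedyRun p D A L) (he : G.Avail D A e) :
    ∃ f ∈ L.toFinset, ¬ Disjoint (G.ends e) (G.ends f) ∧ p e ≤ p f := by
  -- The edge added just when `e` stops being available has the required properties.
  obtain ⟨k, hk, hk'⟩ := Nat.exists_not_and_succ_of_not_zero_of_exists
    (p := fun k => ¬ G.Avail D (A ∪ (L.take k).toFinset) e) (by simpa using he)
    ⟨L.length, by simpa using hL.2 e⟩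
  rw [not_not] at hk
  have hkL : k < L.length := by
    by_contra! hLk
    rw [List.take_of_length_le hLk] at hk
    exact hL.2 e hk
  have take_succ : A ∪ (L.take (k + 1)).toFinset = insert L[k] (A ∪ (L.take k).toFinset) := by
    rw [List.take_succ_eq_append_getElem hkL, List.toFinset_append, ← union_assoc, union_comm]
    simp
  rw [take_succ, avail_insert_iff, not_and] at hk'
  exact ⟨L[k], by simp, hk' hk, (hL.1 ⟨k, hkL⟩).2 e hk⟩

theorem IsGreedyRun.sum_le_two_mul_sum (hL : G.IsGreedyRun p D A L) (hp : ∀ e, 0 ≤ p e)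
    (hN : G.IsMatching N) (hav : ∀ e ∈ N, G.Avail D A e) :
    ∑ e ∈ N, p e ≤ 2 * ∑ f ∈ L.toFinset, p f :=
  hN.sum_le_two_mul_sum (fun f _ => hp f) fun e he => hL.exists_adjacent_le (hav e he)

end Greedy

end GraphEdges

section Selection

variable [DecidableEq E]

/-- The edges selected for the first time in round `t`. -/
def newlySelected (select : (E → Bool) → ℕ → Finset E) (ω : E → Bool) (t : ℕ) : Finset E :=
  select ω t \ selectedBefore select ω t

theorem selectedBefore_succ (select : (E → Bool) → ℕ → Finset E) (ω : E → Bool) (t : ℕ) :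
    selectedBefore select ω (t + 1) = selectedBefore select ω t ∪ newlySelected select ω t := by
  rw [newlySelected, union_sdiff_self_eq_union, selectedBefore, selectedBefore, range_add_one,
    biUnion_insert, union_comm]

theorem subset_selectedBefore_succ (select : (E → Bool) → ℕ → Finset E) (ω : E → Bool) (t : ℕ) :
    select ω t ⊆ selectedBefore select ω (t + 1) :=
  subset_biUnion_of_mem (select ω) (self_mem_range_succ t)

theorem selectedBefore_eq_biUnion_newlySelected (select : (E → Bool) → ℕ → Finset E)
    (ω : E → Bool) (t : ℕ) :
    selectedBefore select ω t = (range t).biUnion (newlySelected select ω) := by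
  induction t with
  | zero => rfl
  | succ t ih => rw [selectedBefore_succ, ih, range_add_one, biUnion_insert, union_comm]

theorem expectedSuccesses_selectedBefore_zero [Fintype E] (p : E → ℝ)
    (select : (E → Bool) → ℕ → Finset E) :
    expectedSuccesses p (selectedBefore select · 0) = 0 := by
  simp [expectedSuccesses, expectation_apply, selectedBefore]

theorem expectedSuccesses_selectedBefore_succ [Fintype E] (p : E → ℝ)
    (select : (E → Bool) → ℕ → Finset E) (t : ℕ) :
    expectedSuccesses p (selectedBefore select · (t + 1)) =
      expectedSuccesses p (selectedBefore select · t) +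
        expectedSuccesses p (newlySelected select · t) := by
  simp only [expectedSuccesses]
  rw [← map_add]
  congr 1
  ext ω
  have hdisj : Disjoint (selectedBefore select ω t) (newlySelected select ω t) := disjoint_sdiff
  rw [selectedBefore_succ, filter_union,
    card_union_of_disjoint (disjoint_filter_filter hdisj), Nat.cast_add, Pi.add_apply]

end Selection

namespace GraphEdges

variable {G : GraphEdges V E} [DecidableEq E]

section FreeEdges

variable [Fintype E]

open Classical in
/-- The edges not selected before round `t` that share no endpoint with a successful edge selected
before round `t`: if `select` keeps its successful edges, those it can still test. -/
noncomputable def freeEdges (G : GraphEdges V E) (select : (E → Bool) → ℕ → Finset E)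
    (ω : E → Bool) (t : ℕ) : Finset E :=
  {e | G.Avail (selectedBefore select ω t) {f ∈ selectedBefore select ω t | ω f} e}

theorem mem_freeEdges {select : (E → Bool) → ℕ → Finset E} {ω : E → Bool} {t : ℕ} {e : E} :
    e ∈ G.freeEdges select ω t ↔
      G.Avail (selectedBefore select ω t) {f ∈ selectedBefore select ω t | ω f} e := by
  simp [freeEdges]

theorem IsMatching.card_successes_le {M : Finset E} (hM : G.IsMatching M)
    (select : (E → Bool) → ℕ → Finset E) (ω : E → Bool) (s : ℕ) :
    #{e ∈ M | ω e} ≤ 2 * #{f ∈ selectedBefore select ω s | ω f} +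
      #{e ∈ M ∩ G.freeEdges select ω s | ω e} := by
  set committed : Finset E := {f ∈ selectedBefore select ω s | ω f}
  set blocked : Finset E := {e ∈ M | ω e} \ G.freeEdges select ω s
  have exists_adjacent : ∀ e ∈ blocked, ∃ f ∈ committed, ¬ Disjoint (G.ends e) (G.ends f) := by
    intro e he
    obtain ⟨he, hfree⟩ := mem_sdiff.1 he
    by_contra! hdisj
    refine hfree (mem_freeEdges.2 ⟨fun hsel => ?_, hdisj⟩)
    exact G.not_disjoint_ends_self e (hdisj e (mem_filter.2 ⟨hsel, (mem_filter.1 he).2⟩))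
  have card_blocked : #blocked ≤ 2 * #committed := by
    have hM' : G.IsMatching blocked := hM.mono (sdiff_subset.trans (filter_subset _ M))
    simpa only [card_eq_sum_ones] using hM'.sum_le_two_mul_sum (c := fun _ => 1)
      (fun _ _ => zero_le_one) (by simpa using exists_adjacent)
  calc #{e ∈ M | ω e} = #blocked + #({e ∈ M | ω e} ∩ G.freeEdges select ω s) :=
        (card_sdiff_add_card_inter _ _).symm
    _ ≤ 2 * #committed + #{e ∈ M ∩ G.freeEdges select ω s | ω e} := by
        rw [filter_inter]
        gcongr

end FreeEdges

section Online

variable {select : (E → Bool) → ℕ → Finset E} {ω : E → Bool} {t : ℕ} {e : E}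

theorem IsOnline.isMatching_newlySelected (h : G.IsOnline select) (ω : E → Bool) (t : ℕ) :
    G.IsMatching (newlySelected select ω t) :=
  (h.1 ω t).mono sdiff_subset

theorem IsOnline.select_update (h : G.IsOnline select) (he : e ∉ selectedBefore select ω t)
    (b : Bool) {s : ℕ} (hs : s ≤ t) : select (Function.update ω e b) s = select ω s := by
  refine h.2 ω _ s fun r hr f hf => Function.update_of_ne ?_ _ _
  rintro rfl
  exact he (mem_biUnion.2 ⟨r, mem_range.2 (hr.trans_le hs), hf⟩)

theorem IsOnline.selectedBefore_update (h : G.IsOnline select)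
    (he : e ∉ selectedBefore select ω t) (b : Bool) :
    selectedBefore select (Function.update ω e b) t = selectedBefore select ω t :=
  biUnion_congr rfl fun _ hs => h.select_update he b (mem_range.1 hs).le

theorem IsOnline.isNonanticipating_newlySelected (h : G.IsOnline select) (t : ℕ) :
    IsNonanticipating (newlySelected select · t) := fun ω e b he => by
  have hsel := (mem_sdiff.1 he).2
  simpa only [newlySelected, h.select_update hsel b le_rfl, h.selectedBefore_update hsel b] using he

theorem IsOnline.isNonanticipating_freeEdges [Fintype E] (h : G.IsOnline select) (t : ℕ) :
    IsNonanticipating (G.freeEdges select · t) := fun ω e b he => by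
  rw [mem_freeEdges] at he ⊢
  rw [h.selectedBefore_update he.1 b]
  convert he using 1
  refine filter_congr fun f hf => ?_
  rw [Function.update_of_ne (ne_of_mem_of_not_mem hf he.1)]

theorem IsOnline.expectedSuccesses_le [Fintype E] {p : E → ℝ} (hp : ∀ e, 0 ≤ p e ∧ p e ≤ 1)
    {alg : (E → Bool) → ℕ → Finset E} (halg : G.IsOnline alg)
    (select : (E → Bool) → ℕ → Finset E) (t s : ℕ) :
    expectedSuccesses p (alg · t) ≤ 2 * expectedSuccesses p (selectedBefore select · s) +
      ∑ r ∈ range (t + 1),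
        expectedSuccesses p fun ω => newlySelected alg ω r ∩ G.freeEdges select ω s := by
  have pointwise (ω : E → Bool) :
      #{e ∈ alg ω t | ω e} ≤ 2 * #{f ∈ selectedBefore select ω s | ω f} +
        ∑ r ∈ range (t + 1), #{e ∈ newlySelected alg ω r ∩ G.freeEdges select ω s | ω e} := by
    refine ((halg.1 ω t).card_successes_le select ω s).trans ?_
    gcongr
    refine (card_le_card ?_).trans card_biUnion_le
    rw [← filter_biUnion, ← biUnion_inter, ← selectedBefore_eq_biUnion_newlySelected]
    gcongr
    exact subset_selectedBefore_succ alg ω t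
  simp only [expectedSuccesses]
  rw [← smul_eq_mul, ← map_smul, ← map_sum, ← map_add]
  refine expectation_mono hp fun ω => ?_
  simpa using mod_cast pointwise ω

end Online

section StableMatching

variable {p : E → ℝ} {sm alg : (E → Bool) → ℕ → Finset E}

theorem IsSM.successes_eq (hsm : G.IsSM p sm) (ω : E → Bool) (t : ℕ) :
    {e ∈ sm ω t | ω e} = {e ∈ selectedBefore sm ω (t + 1) | ω e} := by
  refine (filter_subset_filter _ (subset_selectedBefore_succ sm ω t)).antisymm fun e he => ?_
  obtain ⟨L, -, hsel⟩ := hsm.2 ω t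
  rw [selectedBefore_succ, filter_union, mem_union] at he
  rcases he with hold | hnew
  · rw [mem_filter, hsel]
    exact ⟨mem_union_left _ hold, (mem_filter.1 hold).2⟩
  · exact filter_subset_filter _ sdiff_subset hnew

theorem IsSM.sum_le_two_mul_sum_newlySelected [Fintype E] (hsm : G.IsSM p sm)
    (hp : ∀ e, 0 ≤ p e) {N : Finset E} (hN : G.IsMatching N) {ω : E → Bool} {t : ℕ}
    (hfree : N ⊆ G.freeEdges sm ω t) :
    ∑ e ∈ N, p e ≤ 2 * ∑ f ∈ newlySelected sm ω t, p f := by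
  obtain ⟨L, hL, hsel⟩ := hsm.2 ω t
  have greedy : ∑ e ∈ N, p e ≤ 2 * ∑ f ∈ L.toFinset, p f :=
    hL.sum_le_two_mul_sum hp hN fun e he =>
      have hav := mem_freeEdges.1 (hfree he)
      ⟨fun hdead => hav.1 (mem_filter.1 hdead).1, hav.2⟩
  have subset_new : L.toFinset ⊆ newlySelected sm ω t := fun f hf => by
    have hav := hL.avail_of_mem (List.mem_toFinset.1 hf)
    refine mem_sdiff.2 ⟨hsel ▸ mem_union_right _ hf, fun hold => ?_⟩
    by_cases hω : ω f
    · exact hav.notMem (mem_filter.2 ⟨hold, hω⟩)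
    · exact hav.1 (mem_filter.2 ⟨hold, hω⟩)
  refine greedy.trans ?_
  gcongr
  exact fun f _ _ => hp f

variable [Fintype E]

theorem IsSM.expectedSuccesses_inter_freeEdges_le (hsm : G.IsSM p sm)
    (hp : ∀ e, 0 ≤ p e ∧ p e ≤ 1) {N : (E → Bool) → Finset E} (hN : ∀ ω, G.IsMatching (N ω))
    (hNna : IsNonanticipating N) (s : ℕ) :
    expectedSuccesses p (fun ω => N ω ∩ G.freeEdges sm ω s) ≤
      2 * expectedSuccesses p (newlySelected sm · s) := by
  rw [(hNna.inter (hsm.1.isNonanticipating_freeEdges s)).expectedSuccesses_eq,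
    (hsm.1.isNonanticipating_newlySelected s).expectedSuccesses_eq, ← smul_eq_mul, ← map_smul]
  exact expectation_mono hp fun ω => hsm.sum_le_two_mul_sum_newlySelected (fun e => (hp e).1)
    ((hN ω).mono inter_subset_left) inter_subset_right

theorem IsSM.expectedSuccesses_le_add_increment (hsm : G.IsSM p sm) (halg : G.IsOnline alg)
    (hp : ∀ e, 0 ≤ p e ∧ p e ≤ 1) (t s : ℕ) :
    expectedSuccesses p (alg · t) ≤ 2 * expectedSuccesses p (selectedBefore sm · s) +
      (t + 1 : ℕ) * (2 * expectedSuccesses p (selectedBefore sm · (s + 1)) -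
        2 * expectedSuccesses p (selectedBefore sm · s)) := by
  refine (halg.expectedSuccesses_le hp sm t s).trans ?_
  rw [expectedSuccesses_selectedBefore_succ, ← mul_sub, add_sub_cancel_left]
  gcongr
  calc ∑ r ∈ range (t + 1),
          expectedSuccesses p (fun ω => newlySelected alg ω r ∩ G.freeEdges sm ω s)
      ≤ #(range (t + 1)) • (2 * expectedSuccesses p (newlySelected sm · s)) :=
        sum_le_card_nsmul _ _ _ fun r _ => hsm.expectedSuccesses_inter_freeEdges_le hp
          (halg.isMatching_newlySelected · r) (halg.isNonanticipating_newlySelected r) s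
    _ = (t + 1 : ℕ) * (2 * expectedSuccesses p (newlySelected sm · s)) := by
        rw [card_range, nsmul_eq_mul]

theorem IsSM.mul_expectedSuccesses_le (hsm : G.IsSM p sm) (halg : G.IsOnline alg)
    (hp : ∀ e, 0 ≤ p e ∧ p e ≤ 1) (t : ℕ) :
    (1 - Real.exp (-1)) / 2 * expectedSuccesses p (alg · t) ≤ expectedSuccesses p (sm · t) := by
  have recursion : (1 - Real.exp (-1)) * expectedSuccesses p (alg · t) ≤
      2 * expectedSuccesses p (selectedBefore sm · (t + 1)) :=
    one_sub_exp_neg_one_mul_le (a := fun s => 2 * expectedSuccesses p (selectedBefore sm · s))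
      t.succ_ne_zero (expectedSuccesses_nonneg hp _)
      (by rw [expectedSuccesses_selectedBefore_zero, mul_zero])
      fun s _ => hsm.expectedSuccesses_le_add_increment halg hp t s
  have collected : expectedSuccesses p (sm · t) =
      expectedSuccesses p (selectedBefore sm · (t + 1)) := by
    simp only [expectedSuccesses, hsm.successes_eq]
  linarith

end StableMatching

end GraphEdges

theorem sm_approximates_opt_general [Fintype E] [DecidableEq E]
    (G : GraphEdges V E) (p : E → ℝ) (hp : ∀ e, 0 ≤ p e ∧ p e ≤ 1)
    (T : ℕ) (w : ℕ → ℝ) (hw : ∀ t, 0 ≤ w t)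
    (sm alg : (E → Bool) → ℕ → Finset E)
    (hsm : G.IsSM p sm) (halg : G.IsOnline alg) :
    (1 - Real.exp (-1)) / 2 * expectedReward p w T alg ≤ expectedReward p w T sm := by
  simp only [expectedReward_eq_sum_expectedSuccesses, mul_sum, mul_left_comm _ (w _)]
  exact sum_le_sum fun t _ =>
    mul_le_mul_of_nonneg_left (hsm.mul_expectedSuccesses_le halg hp t) (hw t)

/-- Every stable matching process is a `0.316`-approximation
to every online algorithm, for any nonnegative round weights. -/
theorem sm_approximates_opt
    {V E : Type} [DecidableEq V] [Fintype E] [DecidableEq E]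
    (G : GraphEdges V E) (p : E → ℝ) (hp : ∀ e, 0 ≤ p e ∧ p e ≤ 1)
    (T : ℕ) (w : ℕ → ℝ) (hw : ∀ t, 0 ≤ w t)
    (sm alg : (E → Bool) → ℕ → Finset E)
    (hsm : G.IsSM p sm) (halg : G.IsOnline alg) :
    0.316 * expectedReward p w T alg ≤ expectedReward p w T sm :=
  (mul_le_mul_of_nonneg_right (by linarith [Real.exp_neg_one_lt_d9])
    (expectedReward_nonneg hp hw T alg)).trans
    (sm_approximates_opt_general G p hp T w hw sm alg hsm halg)
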